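/- arXiv:2412.15160 — 3 statements merged into one kernel-verified Lean document; each statement's English description precedes it below -/
import Mathlib

section
/- Let C ⊆ F_q^n be an ℓ-qGRS code with respect to α, v and dimension parameter k, and let I ⊆ {1,…,n} with |I| ≤ k − ℓ. If dim(C_I) = k − |I|, then the shortening C_I ⊆ F_q^{n−|I|} is an ℓ′-qGRS code for some ℓ′ ≤ ℓ; that is, there exist ℓ′ ≤ ℓ and α′, v′ ∈ F_q^{n−|I|} (α′ with pairwise distinct entries, v′ with all nonzero entries) such that C_I is an ℓ′-qGRS code with respect to α′, v′ and dimension parameter k − |I|. -/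
open Polynomial

/-- The evaluation map `f ↦ (v_i f(α_i))_i`. -/
noncomputable def ev {F : Type*} [Field F] {ι : Type*} (α v : ι → F) :
    Polynomial F →ₗ[F] (ι → F) where
  toFun f := fun i => v i * f.eval (α i)
  map_add' f g := by ext i; simp [mul_add]
  map_smul' a f := by ext i; simp [smul_eq_mul]; ring

/-- The generalized Reed–Solomon code `GRS_k(α, v) = ev_{α,v}(F[x]_{<k})`. -/
noncomputable def GRS {F : Type*} [Field F] {ι : Type*} (k : ℕ) (α v : ι → F) :
    Submodule F (ι → F) :=
  (Polynomial.degreeLT F k).map (ev α v)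

/-- The shortening of a code `C ⊆ F^ι` at `I`. -/
noncomputable def shorten {F : Type*} [Field F] {ι : Type*}
    (C : Submodule F (ι → F)) (I : Set ι) :
    Submodule F ({i : ι // i ∉ I} → F) :=
  ((C ⊓ LinearMap.ker (LinearMap.funLeft F F (fun i : I => (i : ι)))).map
    (LinearMap.funLeft F F (fun j : {i : ι // i ∉ I} => (j : ι))))

/-- `C` is an `ℓ`-quasi-GRS code with respect to `α`, `v` and dimension parameter `k`:
`C = C₀ ⊕ C₁` where `C₀` has codimension `ℓ` in `GRS_k(α,v)` and `C₁` is
`ℓ`-dimensional with `C₁ ∩ GRS_k(α,v) = 0`. -/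
def IsQGRS {F : Type*} [Field F] {ι : Type*} (ℓ k : ℕ) (α v : ι → F)
    (C : Submodule F (ι → F)) : Prop :=
  ∃ C0 C1 : Submodule F (ι → F),
    C = C0 ⊔ C1 ∧ C0 ⊓ C1 = ⊥ ∧
    C0 ≤ GRS k α v ∧
    Module.finrank F C0 + ℓ = Module.finrank F (GRS k α v) ∧
    Module.finrank F C1 = ℓ ∧
    C1 ⊓ GRS k α v = ⊥

/-!
An `ℓ`-qGRS code is the same as a code `C` of dimension `dim GRS_k` whose intersection with `GRS_k`
has codimension `ℓ` in `C`: the summand `C₀` is forced to be `C ∩ GRS_k`, and `C₁` is any complement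
of it in `C`.

A polynomial vanishing at the points `α_i`, `i ∈ I`, is a multiple of `∏_{i ∈ I} (X - α_i)`, so the
shortening of `GRS_k` at `I` is a GRS code of parameter `k - |I|` on the remaining points, with
multipliers `v_j ∏_{i ∈ I} (α_j - α_i)`. Shortening does not increase the codimension of a subcode,
so the shortening of `C ∩ GRS_k` has codimension at most `ℓ` in `C_I`, and it lies in the
intersection of `C_I` with this shorter GRS code.
-/

section LinearAlgebra

theorem finrank_map_eq_of_disjoint_ker {R M N : Type*} [Ring R] [AddCommGroup M] [Module R M]
    [AddCommGroup N] [Module R N] {f : M →ₗ[R] N} {p : Submodule R M}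
    (h : Disjoint p (LinearMap.ker f)) : Module.finrank R (p.map f) = Module.finrank R p := by
  rw [← LinearMap.range_domRestrict]
  exact LinearMap.finrank_range_of_inj (LinearMap.injective_domRestrict_iff.2 h)

variable {K V : Type*} [DivisionRing K] [AddCommGroup V] [Module K V]

theorem finrank_sup_eq_add_of_disjoint {p q : Submodule K V} [FiniteDimensional K p]
    [FiniteDimensional K q] (h : Disjoint p q) :
    Module.finrank K (p ⊔ q : Submodule K V) = Module.finrank K p + Module.finrank K q := by
  rw [← Submodule.finrank_sup_add_finrank_inf_eq, h.eq_bot, finrank_bot, add_zero]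

theorem finrank_inf_add_finrank_le_of_le {p q : Submodule K V} [FiniteDimensional K q]
    (hpq : p ≤ q) (s : Submodule K V) :
    Module.finrank K (q ⊓ s : Submodule K V) + Module.finrank K p ≤
      Module.finrank K (p ⊓ s : Submodule K V) + Module.finrank K q := by
  have := Submodule.finiteDimensional_of_le hpq
  have hinf : q ⊓ s ⊓ p = p ⊓ s := by rw [inf_right_comm, inf_eq_right.2 hpq]
  calc Module.finrank K (q ⊓ s : Submodule K V) + Module.finrank K p
      = Module.finrank K (q ⊓ s ⊔ p : Submodule K V) +
          Module.finrank K (p ⊓ s : Submodule K V) := by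
        rw [← Submodule.finrank_sup_add_finrank_inf_eq, hinf]
    _ ≤ Module.finrank K q + Module.finrank K (p ⊓ s : Submodule K V) := by
        gcongr
        exact Submodule.finrank_mono (sup_le inf_le_left hpq)
    _ = Module.finrank K (p ⊓ s : Submodule K V) + Module.finrank K q := add_comm _ _

end LinearAlgebra

theorem degree_nodal_mul_lt_iff {R ι : Type*} [CommRing R] [Nontrivial R] {α : ι → R}
    {I : Finset ι} {g : R[X]} {k : ℕ} :
    (Lagrange.nodal I α * g).degree < k ↔ g.degree < (k - I.card : ℕ) := by
  obtain rfl | hg := eq_or_ne g 0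
  · simp
  rw [mul_comm, Lagrange.nodal_monic.degree_mul, Lagrange.degree_nodal, degree_eq_natDegree hg]
  norm_cast
  exact Nat.lt_sub_iff_add_lt.symm

section Codes

variable {F ι : Type*} [Field F]

theorem nodal_dvd_iff_forall_eval_eq_zero {α : ι → F} {I : Finset ι}
    (hα : Set.InjOn α (I : Set ι)) {f : F[X]} :
    Lagrange.nodal I α ∣ f ↔ ∀ i ∈ I, f.eval (α i) = 0 := by
  refine ⟨fun h i hi => eval_eq_zero_of_dvd_of_eval_eq_zero h (Lagrange.eval_nodal_at_node hi),
    fun h => ?_⟩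
  rw [Lagrange.nodal_eq]
  refine Finset.prod_dvd_of_coprime (fun i hi j hj hij => ?_)
    fun i hi => dvd_iff_isRoot.2 (h i hi)
  exact isCoprime_X_sub_C_of_isUnit_sub (sub_ne_zero.2 (hα.ne hi hj hij)).isUnit

theorem ev_apply (α v : ι → F) (f : F[X]) (i : ι) : ev α v f i = v i * f.eval (α i) := rfl

theorem mem_GRS {k : ℕ} {α v x : ι → F} :
    x ∈ GRS k α v ↔ ∃ f : F[X], f.degree < k ∧ ev α v f = x := by
  simp only [GRS, Submodule.mem_map, mem_degreeLT]

theorem finrank_GRS [Fintype ι] {k : ℕ} {α v : ι → F} (hα : Function.Injective α)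
    (hv : ∀ i, v i ≠ 0) (hk : k ≤ Fintype.card ι) : Module.finrank F (GRS k α v) = k := by
  have hker : Disjoint (degreeLT F k) (LinearMap.ker (ev α v)) := by
    refine LinearMap.disjoint_ker.2 fun f hf hev => ?_
    have hdeg : f.degree < (Finset.univ : Finset ι).card :=
      (mem_degreeLT.1 hf).trans_le (by exact_mod_cast hk)
    refine eq_zero_of_degree_lt_of_eval_index_eq_zero _ hα.injOn hdeg fun i _ => ?_
    exact (mul_eq_zero.1 (congrFun hev i)).resolve_left (hv i)
  rw [GRS, finrank_map_eq_of_disjoint_ker hker, (degreeLTEquiv F k).finrank_eq,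
    Module.finrank_fin_fun]

theorem mem_shorten {C : Submodule F (ι → F)} {I : Set ι} {y : {i : ι // i ∉ I} → F} :
    y ∈ shorten C I ↔ ∃ x ∈ C, (∀ i ∈ I, x i = 0) ∧ (fun j : {i : ι // i ∉ I} => x j) = y := by
  simp only [shorten, Submodule.mem_map, Submodule.mem_inf, LinearMap.mem_ker, funext_iff,
    LinearMap.funLeft_apply, Pi.zero_apply, Subtype.forall, and_assoc]

theorem shorten_mono {C D : Submodule F (ι → F)} (h : C ≤ D) (I : Set ι) :
    shorten C I ≤ shorten D I :=
  Submodule.map_mono (inf_le_inf_right _ h)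

theorem finrank_shorten (C : Submodule F (ι → F)) (I : Set ι) :
    Module.finrank F (shorten C I) =
      Module.finrank F (C ⊓ LinearMap.ker (LinearMap.funLeft F F ((↑) : I → ι)) :
        Submodule F (ι → F)) := by
  refine finrank_map_eq_of_disjoint_ker (LinearMap.disjoint_ker.2 fun x hx hx' => ?_)
  funext i
  by_cases hi : i ∈ I
  · exact congrFun (LinearMap.mem_ker.1 hx.2) ⟨i, hi⟩
  · exact congrFun hx' ⟨i, hi⟩

theorem finrank_shorten_add_finrank_le_of_le [Finite ι] {C D : Submodule F (ι → F)} (h : D ≤ C)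
    (I : Set ι) :
    Module.finrank F (shorten C I) + Module.finrank F D ≤
      Module.finrank F (shorten D I) + Module.finrank F C := by
  rw [finrank_shorten, finrank_shorten]
  exact finrank_inf_add_finrank_le_of_le h _

/-- The column multipliers `v_j ∏_{i ∈ I} (α_j - α_i)`, `j ∉ I`, of the shortening at `I` of a
generalized Reed–Solomon code with evaluation points `α` and column multipliers `v`; the product is
encoded as the value at `α_j` of the nodal polynomial of `I`. -/
noncomputable def shortenMultiplier (α v : ι → F) (I : Finset ι) :
    {i : ι // i ∉ (I : Set ι)} → F :=
  fun j => v j * (Lagrange.nodal I α).eval (α j)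

theorem shortenMultiplier_ne_zero {α v : ι → F} (hα : Function.Injective α) (hv : ∀ i, v i ≠ 0)
    (I : Finset ι) (j : {i : ι // i ∉ (I : Set ι)}) : shortenMultiplier α v I j ≠ 0 := by
  refine mul_ne_zero (hv j) (Lagrange.eval_nodal_not_at_node fun i hi => hα.ne ?_)
  rintro rfl
  exact j.2 hi

theorem ev_nodal_mul (α v : ι → F) (I : Finset ι) (g : F[X]) (j : {i : ι // i ∉ (I : Set ι)}) :
    ev α v (Lagrange.nodal I α * g) j = ev (α ∘ Subtype.val) (shortenMultiplier α v I) g j := by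
  simp only [ev_apply, shortenMultiplier, eval_mul, mul_assoc, Function.comp_apply]

theorem shorten_GRS {k : ℕ} {α v : ι → F} (hα : Function.Injective α) (hv : ∀ i, v i ≠ 0)
    (I : Finset ι) :
    shorten (GRS k α v) (I : Set ι) =
      GRS (k - I.card) (α ∘ Subtype.val) (shortenMultiplier α v I) := by
  have eval_eq_zero_iff (f : F[X]) (i : ι) : ev α v f i = 0 ↔ f.eval (α i) = 0 := by
    rw [ev_apply, mul_eq_zero, or_iff_right (hv i)]
  ext y
  rw [mem_shorten, mem_GRS]
  constructor
  · rintro ⟨x, hx, hxI, rfl⟩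
    obtain ⟨f, hf, rfl⟩ := mem_GRS.1 hx
    obtain ⟨g, rfl⟩ := (nodal_dvd_iff_forall_eval_eq_zero hα.injOn).2
      fun i hi => (eval_eq_zero_iff f i).1 (hxI i hi)
    exact ⟨g, degree_nodal_mul_lt_iff.1 hf, funext fun j => (ev_nodal_mul α v I g j).symm⟩
  · rintro ⟨g, hg, rfl⟩
    refine ⟨ev α v (Lagrange.nodal I α * g), mem_GRS.2 ⟨_, degree_nodal_mul_lt_iff.2 hg, rfl⟩,
      fun i hi => (eval_eq_zero_iff _ i).2 ?_, funext fun j => ev_nodal_mul α v I g j⟩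
    rw [eval_mul, Lagrange.eval_nodal_at_node hi, zero_mul]

variable [Finite ι] {ℓ k : ℕ} {α v : ι → F} {C : Submodule F (ι → F)}

theorem isQGRS_iff :
    IsQGRS ℓ k α v C ↔
      Module.finrank F C = Module.finrank F (GRS k α v) ∧
        Module.finrank F (C ⊓ GRS k α v : Submodule F (ι → F)) + ℓ = Module.finrank F C := by
  constructor
  · rintro ⟨C₀, C₁, rfl, hdisj, hC₀, hcodim, hC₁, hC₁_inf⟩
    have hinf : (C₀ ⊔ C₁) ⊓ GRS k α v = C₀ := by
      rw [sup_inf_assoc_of_le C₁ hC₀, hC₁_inf, sup_bot_eq]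
    have hsup : Module.finrank F (C₀ ⊔ C₁ : Submodule F (ι → F)) = Module.finrank F C₀ + ℓ := by
      rw [finrank_sup_eq_add_of_disjoint (disjoint_iff.2 hdisj), hC₁]
    exact ⟨hsup.trans hcodim, by rw [hinf, hsup]⟩
  · rintro ⟨hdim, hcodim⟩
    obtain ⟨C₁, hdisj, hsup⟩ :=
      IsModularLattice.exists_disjoint_and_sup_eq (inf_le_left : C ⊓ GRS k α v ≤ C)
    have hC₁ : Module.finrank F C₁ = ℓ := by
      have h := finrank_sup_eq_add_of_disjoint hdisj
      rw [hsup] at h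
      omega
    have hC₁_inf : C₁ ⊓ GRS k α v = ⊥ := by
      have hC₁_le : C₁ ≤ C := le_sup_right.trans hsup.le
      rw [← inf_eq_right.2 hC₁_le, inf_right_comm, hdisj.eq_bot]
    exact ⟨C ⊓ GRS k α v, C₁, hsup.symm, hdisj.eq_bot, inf_le_right, hcodim.trans hdim, hC₁,
      hC₁_inf⟩

theorem IsQGRS.finrank_shorten_le (hC : IsQGRS ℓ k α v C) (hα : Function.Injective α)
    (hv : ∀ i, v i ≠ 0) (I : Finset ι) :
    Module.finrank F (shorten C (I : Set ι)) ≤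
      Module.finrank F (shorten C (I : Set ι) ⊓
        GRS (k - I.card) (α ∘ Subtype.val) (shortenMultiplier α v I) : Submodule F _) + ℓ := by
  have hcodim := (isQGRS_iff.1 hC).2
  have hshorten : Module.finrank F (shorten C (I : Set ι)) +
        Module.finrank F (C ⊓ GRS k α v : Submodule F (ι → F)) ≤
      Module.finrank F (shorten (C ⊓ GRS k α v) (I : Set ι)) + Module.finrank F C :=
    finrank_shorten_add_finrank_le_of_le inf_le_left _
  have hle : shorten (C ⊓ GRS k α v) (I : Set ι) ≤ shorten C (I : Set ι) ⊓
      GRS (k - I.card) (α ∘ Subtype.val) (shortenMultiplier α v I) := by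
    rw [← shorten_GRS hα hv]
    exact le_inf (shorten_mono inf_le_left _) (shorten_mono inf_le_right _)
  have hmono := Submodule.finrank_mono hle
  omega

theorem stmt8_general (hα : Function.Injective α) (hv : ∀ i, v i ≠ 0) (hC : IsQGRS ℓ k α v C)
    {I : Finset ι} (hdim : Module.finrank F (shorten C (I : Set ι)) + I.card = k) :
    ∃ ℓ' ≤ ℓ, IsQGRS ℓ' (k - I.card) (α ∘ Subtype.val) (shortenMultiplier α v I)
      (shorten C (I : Set ι)) := by
  have := Fintype.ofFinite {i : ι // i ∉ (I : Set ι)}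
  set G := GRS (k - I.card) (α ∘ Subtype.val) (shortenMultiplier α v I)
  have hD : Module.finrank F (shorten C (I : Set ι)) = k - I.card := by omega
  have hG : Module.finrank F G = k - I.card := by
    refine finrank_GRS (hα.comp Subtype.val_injective) (shortenMultiplier_ne_zero hα hv I) ?_
    rw [← hD, ← Module.finrank_fintype_fun_eq_card F]
    exact Submodule.finrank_le _
  have hinf_le : Module.finrank F (shorten C (I : Set ι) ⊓ G : Submodule F _) ≤
      Module.finrank F (shorten C (I : Set ι)) := Submodule.finrank_mono inf_le_left
  refine ⟨Module.finrank F (shorten C (I : Set ι)) -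
      Module.finrank F (shorten C (I : Set ι) ⊓ G : Submodule F _), ?_,
    isQGRS_iff.2 ⟨hD.trans hG.symm, Nat.add_sub_of_le hinf_le⟩⟩
  exact Nat.sub_le_iff_le_add'.2 (hC.finrank_shorten_le hα hv I)

end Codes

/-- Shortening an `ℓ`-qGRS code of dimension `k` at `I` with `|I| ≤ k − ℓ`, provided
`dim C_I = k − |I|`, yields an `ℓ′`-qGRS code for some `ℓ′ ≤ ℓ`. -/
theorem stmt8 {F : Type*} [Field F] [Fintype F] {n k ℓ : ℕ} (hkn : k ≤ n)
    (α v : Fin n → F) (hα : Function.Injective α) (hv : ∀ i, v i ≠ 0)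
    (C : Submodule F (Fin n → F)) (hC : IsQGRS ℓ k α v C)
    (I : Finset (Fin n)) (hI : I.card ≤ k - ℓ)
    (hdim : Module.finrank F (shorten C (I : Set (Fin n))) = k - I.card) :
    ∃ ℓ' ≤ ℓ, ∃ α' v' : {i : Fin n // i ∉ (I : Set (Fin n))} → F,
      Function.Injective α' ∧ (∀ j, v' j ≠ 0) ∧
      IsQGRS ℓ' (k - I.card) α' v' (shorten C (I : Set (Fin n))) := by
  obtain ⟨ℓ', hℓ', hD⟩ := stmt8_general hα hv hC (I := I) (by omega)
  exact ⟨ℓ', hℓ', _, _, hα.comp Subtype.val_injective, shortenMultiplier_ne_zero hα hv I, hD⟩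
end

section
/- Let ℓ ≤ k ≤ d and let C = ev_{α,v}(P) ⊆ F_q^n, where P = P_0 ⊕ P_1 ⊆ F_q[x], P_0 is a subspace of codimension ℓ of F_q[x]_{<k}, P_1 is a subspace of dimension ℓ with P_1 ∩ F_q[x]_{<k} = 0, and every element of P has degree ≤ d (so C is an ℓ-qGRS code of dimension k). Let I ⊆ {1,…,n} with |I| ≤ k − ℓ and suppose dim(C_I) = k − |I|. Then dim(C_I ⋆ C_I) ≤ min{ (ℓ+2)(k−|I|) − 1 − ℓ(ℓ−1)/2, k + d − 2|I| + ℓ(ℓ+1)/2, 2(d − |I|) + 1 }. -/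
open Polynomial

/-- The Schur (componentwise) product of two subspaces of `F^ι`. -/
def schurProduct (F : Type*) [Field F] {ι : Type*} (A B : Submodule F (ι → F)) :
    Submodule F (ι → F) :=
  Submodule.span F {x | ∃ a ∈ A, ∃ b ∈ B, x = a * b}

/-!
Let `G = ∏_{i ∈ I} (x - α_i)`. A polynomial vanishes at the `α_i`, `i ∈ I`, iff it is a multiple
of `G`, and dividing by `G` lowers degrees by `|I|`; so the shortened code consists of evaluations
(with multipliers `v_j G(α_j)`) of a space `U ⊕ V` of polynomials of degree `≤ d - |I|`, with
`U ⊆ F[x]_{<k-|I|}`, `dim U = k - |I| - ℓ` and `dim V = ℓ`. Schur products of evaluations are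
evaluations of products, so it is enough to bound the dimension of `(U + V)²`:
* it is contained in `F[x]_{<2(d-|I|)+1}`;
* it is `U(U + V) + V²`, where `U(U + V) ⊆ F[x]_{<k+d-2|I|}` and `dim V² ≤ ℓ(ℓ+1)/2`;
* it is `U² + UV + V²`, where `U² ⊆ F[x]_{<2(k-|I|)-1}` and `dim UV ≤ (k-|I|-ℓ)ℓ`.
-/

open Module

section LinearAlgebra

variable {K V V' : Type*} [DivisionRing K] [AddCommGroup V] [Module K V] [AddCommGroup V']
  [Module K V']

theorem span_range_coe_basis {R M ι : Type*} [Semiring R] [AddCommMonoid M] [Module R M]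
    {N : Submodule R M} (b : Basis ι R N) :
    Submodule.span R (Set.range fun i => (b i : M)) = N := by
  have hrange : (Set.range fun i => (b i : M)) = N.subtype '' Set.range b := by
    rw [← Set.range_comp]; rfl
  rw [hrange, Submodule.span_image, b.span_eq, Submodule.map_subtype_top]

theorem exists_submodule_le_finrank_eq {W : Submodule K V} {n : ℕ} (hn : n ≤ finrank K W) :
    ∃ U ≤ W, finrank K U = n := by
  obtain ⟨b, hb⟩ := exists_linearIndependent_of_le_finrank hn
  refine ⟨(Submodule.span K (Set.range b)).map W.subtype, Submodule.map_subtype_le _ _, ?_⟩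
  rw [Submodule.finrank_map_subtype_eq, finrank_span_eq_card hb, Fintype.card_fin]

theorem exists_submodule_le_map_eq_finrank_eq (f : V →ₗ[K] V') (Q : Submodule K V) :
    ∃ W ≤ Q, W.map f = Q.map f ∧ finrank K W = finrank K (Q.map f) := by
  obtain ⟨W, hdisj, hsup⟩ :=
    IsModularLattice.exists_disjoint_and_sup_eq (inf_le_left : Q ⊓ LinearMap.ker f ≤ Q)
  have hWQ : W ≤ Q := hsup ▸ le_sup_right
  have hker : Disjoint W (LinearMap.ker f) := disjoint_iff_inf_le.2 <|
    (le_inf (le_inf (inf_le_left.trans hWQ) inf_le_right) inf_le_left).trans hdisj.le_bot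
  have hmap : W.map f = Q.map f := by
    have hbot : (Q ⊓ LinearMap.ker f).map f = ⊥ := LinearMap.le_ker_iff_map.1 inf_le_right
    rw [← hsup, Submodule.map_sup, hbot, bot_sup_eq]
  refine ⟨W, hWQ, hmap, ?_⟩
  rw [← hmap, ← LinearMap.range_domRestrict,
    LinearMap.finrank_range_of_inj (LinearMap.injective_domRestrict_iff.2 hker)]

theorem finrank_add_finrank_inf_le {W P : Submodule K V} [FiniteDimensional K P] (hWP : W ≤ P)
    (L : Submodule K V) :
    finrank K W + finrank K (P ⊓ L : Submodule K V) ≤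
      finrank K P + finrank K (W ⊓ L : Submodule K V) := by
  have : FiniteDimensional K W := Submodule.finiteDimensional_of_le hWP
  have hmodular := Submodule.finrank_sup_add_finrank_inf_eq W (P ⊓ L)
  rw [← inf_assoc, inf_eq_left.2 hWP] at hmodular
  rw [← hmodular]
  gcongr
  exact Submodule.finrank_mono (sup_le hWP inf_le_left)

theorem finrank_sup_le_finrank_sup_inf_add {P₀ P₁ L : Submodule K V}
    [FiniteDimensional K (P₀ ⊔ P₁ : Submodule K V)] (h : P₀ ≤ L) :
    finrank K (P₀ ⊔ P₁ : Submodule K V) ≤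
      finrank K ((P₀ ⊔ P₁) ⊓ L : Submodule K V) + finrank K P₁ := by
  have : FiniteDimensional K P₀ :=
    Submodule.finiteDimensional_of_le (le_sup_left : P₀ ≤ P₀ ⊔ P₁)
  have : FiniteDimensional K P₁ :=
    Submodule.finiteDimensional_of_le (le_sup_right : P₁ ≤ P₀ ⊔ P₁)
  refine (Submodule.finrank_add_le_finrank_add_finrank P₀ P₁).trans ?_
  gcongr
  exact Submodule.finrank_mono (le_inf le_sup_left h)

theorem exists_sup_eq_of_finrank_le_finrank_inf_add {W L : Submodule K V} [FiniteDimensional K W]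
    {ℓ : ℕ} (hW : finrank K W ≤ finrank K (W ⊓ L : Submodule K V) + ℓ) (hℓ : ℓ ≤ finrank K W) :
    ∃ U V : Submodule K V,
      U ⊔ V = W ∧ U ≤ L ∧ finrank K U = finrank K W - ℓ ∧ finrank K V = ℓ := by
  obtain ⟨U, hU, hUrank⟩ := exists_submodule_le_finrank_eq (Nat.sub_le_iff_le_add.2 hW)
  have hUW : U ≤ W := hU.trans inf_le_left
  obtain ⟨V, hdisj, hsup⟩ := IsModularLattice.exists_disjoint_and_sup_eq hUW
  have : FiniteDimensional K U := Submodule.finiteDimensional_of_le hUW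
  have : FiniteDimensional K V := Submodule.finiteDimensional_of_le (hsup ▸ le_sup_right : V ≤ W)
  have hrank := Submodule.finrank_sup_add_finrank_inf_eq U V
  rw [hsup, hdisj.eq_bot, finrank_bot] at hrank
  exact ⟨U, V, hsup, hU.trans inf_le_right, hUrank, by omega⟩

end LinearAlgebra

section ProductsOfSubspaces

variable {K A : Type*} [Field K] [Ring A] [Algebra K A]

theorem finiteDimensional_mul (M N : Submodule K A) [FiniteDimensional K M]
    [FiniteDimensional K N] : FiniteDimensional K (M * N : Submodule K A) :=
  Module.Finite.iff_fg.2 ((Module.Finite.iff_fg.1 ‹_›).mul (Module.Finite.iff_fg.1 ‹_›))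

theorem finrank_mul_le (M N : Submodule K A) [FiniteDimensional K M] [FiniteDimensional K N] :
    finrank K (M * N : Submodule K A) ≤ finrank K M * finrank K N := by
  let b := finBasis K M
  let c := finBasis K N
  have hspan : M * N =
      Submodule.span K (Set.range fun p : Fin (finrank K M) × Fin (finrank K N) =>
        (b p.1 * c p.2 : A)) := by
    conv_lhs => rw [← span_range_coe_basis b, ← span_range_coe_basis c, Submodule.span_mul_span]
    rw [← Set.image2_mul, Set.image2_range]
  rw [hspan]
  refine (finrank_range_le_card _).trans_eq ?_
  rw [Fintype.card_prod, Fintype.card_fin, Fintype.card_fin]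

theorem finrank_mul_sup_le (U V : Submodule K A) [FiniteDimensional K U]
    [FiniteDimensional K V] :
    finrank K (U * (U ⊔ V) : Submodule K A) ≤
      finrank K (U * U : Submodule K A) + finrank K U * finrank K V := by
  have := finiteDimensional_mul U U
  have := finiteDimensional_mul U V
  rw [Submodule.mul_sup]
  exact (Submodule.finrank_add_le_finrank_add_finrank _ _).trans
    (Nat.add_le_add_left (finrank_mul_le U V) _)

end ProductsOfSubspaces

section SquaresOfSubspaces

variable {K A : Type*} [Field K] [CommRing A] [Algebra K A]

theorem finrank_mul_self_le (M : Submodule K A) [FiniteDimensional K M] :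
    finrank K (M * M : Submodule K A) ≤ (finrank K M + 1).choose 2 := by
  let b := finBasis K M
  let bMul : Sym2 (Fin (finrank K M)) → A := fun z => (z.map fun i => (b i : A)).mul
  have hle : M * M ≤ Submodule.span K (Set.range bMul) := by
    conv_lhs => rw [← span_range_coe_basis b, Submodule.span_mul_span]
    refine Submodule.span_mono ?_
    rintro _ ⟨_, ⟨i, rfl⟩, _, ⟨j, rfl⟩, rfl⟩
    exact ⟨s(i, j), rfl⟩
  have := FiniteDimensional.span_of_finite K (Set.finite_range bMul)
  calc finrank K (M * M : Submodule K A)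
      ≤ finrank K (Submodule.span K (Set.range bMul)) := Submodule.finrank_mono hle
    _ ≤ Fintype.card (Sym2 (Fin (finrank K M))) := finrank_range_le_card bMul
    _ = (finrank K M + 1).choose 2 := by rw [Sym2.card, Fintype.card_fin]

theorem finrank_sup_mul_sup_le (U V : Submodule K A) [FiniteDimensional K U]
    [FiniteDimensional K V] :
    finrank K ((U ⊔ V) * (U ⊔ V) : Submodule K A) ≤
      finrank K (U * (U ⊔ V) : Submodule K A) + (finrank K V + 1).choose 2 := by
  have := finiteDimensional_mul U (U ⊔ V)
  have := finiteDimensional_mul V V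
  have hdecomp : (U ⊔ V) * (U ⊔ V) = U * (U ⊔ V) ⊔ V * V := by
    rw [Submodule.sup_mul, Submodule.mul_sup V, Submodule.mul_sup U, mul_comm V U, ← sup_assoc,
      sup_assoc (U * U), sup_idem]
  rw [hdecomp]
  exact (Submodule.finrank_add_le_finrank_add_finrank _ _).trans
    (Nat.add_le_add_left (finrank_mul_self_le V) _)

end SquaresOfSubspaces

section DegreeLT

theorem degreeLT_mul_degreeLT_le (R : Type*) [CommSemiring R] (a b : ℕ) :
    degreeLT R a * degreeLT R b ≤ degreeLT R (a + b - 1) := by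
  refine Submodule.mul_le.2 fun f hf g hg => ?_
  rcases eq_or_ne f 0 with rfl | hf0
  · simp
  rcases eq_or_ne g 0 with rfl | hg0
  · simp
  rw [mem_degreeLT, ← natDegree_lt_iff_degree_lt hf0] at hf
  rw [mem_degreeLT, ← natDegree_lt_iff_degree_lt hg0] at hg
  refine mem_degreeLT.2 (degree_le_natDegree.trans_lt ?_)
  have := natDegree_mul_le (p := f) (q := g)
  norm_cast
  omega

theorem finrank_degreeLT (R : Type*) [Semiring R] [StrongRankCondition R] (n : ℕ) :
    finrank R (degreeLT R n) = n := by
  rw [finrank_eq_card_basis (degreeLT.basis R n), Fintype.card_fin]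

theorem finrank_mul_le_of_le_degreeLT {K : Type*} [Field K] {M N : Submodule K K[X]} {a b : ℕ}
    (hM : M ≤ degreeLT K a) (hN : N ≤ degreeLT K b) :
    finrank K (M * N : Submodule K K[X]) ≤ a + b - 1 :=
  (Submodule.finrank_mono ((mul_le_mul' hM hN).trans (degreeLT_mul_degreeLT_le K a b))).trans_eq
    (finrank_degreeLT K _)

theorem comap_mulLeft_degreeLT {R : Type*} [CommRing R] [IsDomain R] {g : R[X]} (hg : g ≠ 0)
    (n : ℕ) :
    (degreeLT R n).comap (LinearMap.mulLeft R g) = degreeLT R (n - g.natDegree) := by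
  ext f
  rcases eq_or_ne f 0 with rfl | hf
  · simp
  rw [Submodule.mem_comap, LinearMap.mulLeft_apply, mem_degreeLT, mem_degreeLT,
    ← natDegree_lt_iff_degree_lt (mul_ne_zero hg hf), ← natDegree_lt_iff_degree_lt hf,
    natDegree_mul hg hf]
  omega

end DegreeLT

section EvaluationCodes

variable {F ι : Type*} [Field F]

theorem ev_mul_ev (α u w : ι → F) (f g : F[X]) :
    ev α u f * ev α w g = ev α (u * w) (f * g) := by
  ext i
  simp only [ev, LinearMap.coe_mk, AddHom.coe_mk, Pi.mul_apply, eval_mul]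
  ring

theorem schurProduct_map_ev (α u w : ι → F) (A B : Submodule F F[X]) :
    schurProduct F (A.map (ev α u)) (B.map (ev α w)) = (A * B).map (ev α (u * w)) := by
  refine le_antisymm (Submodule.span_le.2 ?_) (Submodule.map_le_iff_le_comap.2 ?_)
  · rintro _ ⟨_, ⟨f, hf, rfl⟩, _, ⟨g, hg, rfl⟩, rfl⟩
    exact ⟨f * g, Submodule.mul_mem_mul hf hg, (ev_mul_ev α u w f g).symm⟩
  · refine Submodule.mul_le.2 fun f hf g hg => Submodule.subset_span ?_
    exact ⟨_, ⟨f, hf, rfl⟩, _, ⟨g, hg, rfl⟩, (ev_mul_ev α u w f g).symm⟩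

theorem nodal_dvd_of_forall_eval_eq_zero {α : ι → F} {I : Finset ι} (hα : Set.InjOn α I)
    {f : F[X]} (hf : ∀ i ∈ I, f.eval (α i) = 0) : Lagrange.nodal I α ∣ f :=
  Finset.prod_dvd_of_coprime
    (fun _ hi _ hj hij => isCoprime_X_sub_C_of_isUnit_sub
      (sub_ne_zero.2 (hα.ne hi hj hij)).isUnit)
    fun i hi => dvd_iff_isRoot.2 (hf i hi)

theorem shorten_map_ev {α v : ι → F} {I : Finset ι} (hα : Set.InjOn α I) (hv : ∀ i ∈ I, v i ≠ 0)
    (P : Submodule F F[X]) :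
    shorten (P.map (ev α v)) (I : Set ι) =
      (P.comap (LinearMap.mulLeft F (Lagrange.nodal I α))).map
        (ev (α ∘ Subtype.val) fun j => v j * (Lagrange.nodal I α).eval (α j)) := by
  have hev (g : F[X]) :
      LinearMap.funLeft F F (fun j : {i // i ∉ (I : Set ι)} => (j : ι))
          (ev α v (Lagrange.nodal I α * g)) =
        ev (α ∘ Subtype.val) (fun j => v j * (Lagrange.nodal I α).eval (α j)) g := by
    ext j
    simp only [ev, LinearMap.funLeft_apply, LinearMap.coe_mk, AddHom.coe_mk, eval_mul, mul_assoc,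
      Function.comp_apply]
  ext x
  constructor
  · rintro ⟨_, ⟨⟨f, hf, rfl⟩, hker⟩, rfl⟩
    have hroot (i : ι) (hi : i ∈ I) : f.eval (α i) = 0 :=
      (mul_eq_zero.1 (congrFun (LinearMap.mem_ker.1 hker) ⟨i, hi⟩)).resolve_left (hv i hi)
    obtain ⟨g, rfl⟩ := nodal_dvd_of_forall_eval_eq_zero hα hroot
    exact ⟨g, hf, (hev g).symm⟩
  · rintro ⟨g, hg, rfl⟩
    refine ⟨_, ⟨⟨_, hg, rfl⟩, LinearMap.mem_ker.2 ?_⟩, hev g⟩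
    ext i
    simp [ev, LinearMap.funLeft_apply, Lagrange.eval_nodal_at_node (Finset.mem_coe.1 i.2)]

theorem exists_shorten_map_ev_eq_map_sup {k ℓ d : ℕ} {α v : ι → F} {P : Submodule F F[X]}
    {I : Finset ι} (hdeg : P ≤ degreeLT F d)
    (hcodim : finrank F P ≤ finrank F (P ⊓ degreeLT F k : Submodule F F[X]) + ℓ)
    (hα : Set.InjOn α I) (hv : ∀ i ∈ I, v i ≠ 0)
    (hℓ : ℓ ≤ finrank F (shorten (P.map (ev α v)) (I : Set ι))) :
    ∃ (u : {i // i ∉ (I : Set ι)} → F) (U V : Submodule F F[X]),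
      shorten (P.map (ev α v)) (I : Set ι) = (U ⊔ V).map (ev (α ∘ Subtype.val) u) ∧
      U ≤ degreeLT F (k - I.card) ∧ U ⊔ V ≤ degreeLT F (d - I.card) ∧
      finrank F U = finrank F (shorten (P.map (ev α v)) (I : Set ι)) - ℓ ∧ finrank F V = ℓ := by
  have hcomap (n : ℕ) : (degreeLT F n).comap (LinearMap.mulLeft F (Lagrange.nodal I α)) =
      degreeLT F (n - I.card) := by
    rw [comap_mulLeft_degreeLT Lagrange.nodal_ne_zero, Lagrange.natDegree_nodal]
  rw [shorten_map_ev hα hv] at hℓ ⊢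
  set μ := LinearMap.mulLeft F (Lagrange.nodal I α)
  set φ := ev (α ∘ Subtype.val)
    fun j : {i // i ∉ (I : Set ι)} => v j * (Lagrange.nodal I α).eval (α j)
  have hμ : Function.Injective μ := mul_right_injective₀ Lagrange.nodal_ne_zero
  -- `φ` need not be injective on `P.comap μ`, so pass to a subspace it maps bijectively.
  obtain ⟨W, hWP, hWmap, hWrank⟩ := exists_submodule_le_map_eq_finrank_eq φ (P.comap μ)
  have hWdeg : W ≤ degreeLT F (d - I.card) :=
    hWP.trans ((Submodule.comap_mono hdeg).trans_eq (hcomap d))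
  have : FiniteDimensional F P := Submodule.finiteDimensional_of_le hdeg
  have : FiniteDimensional F W := Submodule.finiteDimensional_of_le hWdeg
  have hWcodim :
      finrank F W ≤ finrank F (W ⊓ degreeLT F (k - I.card) : Submodule F F[X]) + ℓ := by
    have hinf := finrank_add_finrank_inf_le (Submodule.map_le_iff_le_comap.2 hWP) (degreeLT F k)
    rw [Submodule.map_inf_eq_map_inf_comap, hcomap,
      ← (Submodule.equivMapOfInjective μ hμ W).finrank_eq,
      ← (Submodule.equivMapOfInjective μ hμ _).finrank_eq] at hinf
    omega
  obtain ⟨U, V, rfl, hU, hUrank, hVrank⟩ :=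
    exists_sup_eq_of_finrank_le_finrank_inf_add hWcodim (hWrank ▸ hℓ)
  exact ⟨_, U, V, hWmap.symm, hU, hWdeg, hWrank ▸ hUrank, hVrank⟩

end EvaluationCodes

theorem two_mul_sub_one_add_choose_two_le {m ℓ : ℕ} (h : ℓ ≤ m) :
    2 * m - 1 + (m - ℓ) * ℓ + (ℓ + 1).choose 2 ≤ (ℓ + 2) * m - 1 - ℓ * (ℓ - 1) / 2 := by
  rcases Nat.eq_zero_or_pos m with rfl | hm
  · obtain rfl := Nat.le_zero.1 h
    rfl
  obtain ⟨r, rfl⟩ := Nat.exists_eq_add_of_le' h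
  have hsq : ℓ * ℓ = 2 * ℓ.choose 2 + ℓ := by
    have hchoose : ℓ.choose 2 * 2 = ℓ * ℓ - ℓ := by
      rw [Nat.choose_succ_right_eq, Nat.choose_one_right, Nat.mul_sub_one]
    have := Nat.le_mul_self ℓ
    omega
  have hsucc : (ℓ + 1).choose 2 = ℓ + ℓ.choose 2 := by
    rw [Nat.choose_succ_succ', Nat.choose_one_right]
  have hexpand : (ℓ + 2) * (r + ℓ) = r * ℓ + ℓ * ℓ + 2 * (r + ℓ) := by ring
  rw [← Nat.choose_two_right, Nat.add_sub_cancel]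
  omega

theorem stmt10_general {F ι : Type*} [Field F] {k ℓ d : ℕ} {α v : ι → F} {P : Submodule F F[X]}
    {I : Finset ι} (hkd : k ≤ d) (hdeg : P ≤ degreeLT F (d + 1))
    (hcodim : finrank F P ≤ finrank F (P ⊓ degreeLT F k : Submodule F F[X]) + ℓ)
    (hα : Set.InjOn α I) (hv : ∀ i ∈ I, v i ≠ 0) (hI : I.card + ℓ ≤ k)
    (hdim : finrank F (shorten (P.map (ev α v)) (I : Set ι)) = k - I.card) :
    finrank F (schurProduct F (shorten (P.map (ev α v)) (I : Set ι))
        (shorten (P.map (ev α v)) (I : Set ι))) ≤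
      min (min ((ℓ + 2) * (k - I.card) - 1 - ℓ * (ℓ - 1) / 2)
          (k + d - 2 * I.card + ℓ * (ℓ + 1) / 2))
        (2 * (d - I.card) + 1) := by
  obtain ⟨u, U, V, hUV, hU, hdegUV, hUrank, hVrank⟩ :=
    exists_shorten_map_ev_eq_map_sup hdeg hcodim hα hv (by omega)
  have : FiniteDimensional F U := Submodule.finiteDimensional_of_le hU
  have : FiniteDimensional F (U ⊔ V : Submodule F F[X]) :=
    Submodule.finiteDimensional_of_le hdegUV
  have : FiniteDimensional F V := Submodule.finiteDimensional_of_le (le_sup_right : V ≤ U ⊔ V)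
  have := finiteDimensional_mul (U ⊔ V) (U ⊔ V)
  have hsquare := finrank_mul_le_of_le_degreeLT hdegUV hdegUV
  have hmixed := finrank_mul_le_of_le_degreeLT hU hdegUV
  have hUU := finrank_mul_le_of_le_degreeLT hU hU
  have hsup := finrank_sup_mul_sup_le U V
  have hmul := finrank_mul_sup_le U V
  rw [hUV, schurProduct_map_ev]
  rw [hVrank] at hsup hmul
  rw [hUrank, hdim] at hmul
  refine (Submodule.finrank_map_le _ _).trans (le_min (le_min ?_ ?_) (by omega))
  · exact le_trans (by omega) (two_mul_sub_one_add_choose_two_le (by omega : ℓ ≤ k - I.card))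
  · rw [Nat.choose_two_right, Nat.add_sub_cancel, mul_comm (ℓ + 1)] at hsup
    omega

/-- Upper bound for the Schur square of a shortening of an `ℓ`-qGRS code
`C = ev_{α,v}(P)`, where `P = P₀ ⊕ P₁` with `P₀` of codimension `ℓ` in `F[x]_{<k}`,
`P₁` of dimension `ℓ` meeting `F[x]_{<k}` trivially, all elements of `P` of degree
≤ `d`, `|I| ≤ k − ℓ` and `dim C_I = k − |I|`. -/
theorem stmt10 {F : Type*} [Field F] [Fintype F] {n k ℓ d : ℕ}
    (hℓk : ℓ ≤ k) (hkd : k ≤ d)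
    (α v : Fin n → F) (hα : Function.Injective α) (hv : ∀ i, v i ≠ 0)
    (P P0 P1 : Submodule F (Polynomial F))
    (hP : P = P0 ⊔ P1) (hdisj : P0 ⊓ P1 = ⊥)
    (hP0le : P0 ≤ Polynomial.degreeLT F k)
    (hcodim : Module.finrank F P0 + ℓ = Module.finrank F (Polynomial.degreeLT F k))
    (hP1 : Module.finrank F P1 = ℓ)
    (hP1int : P1 ⊓ Polynomial.degreeLT F k = ⊥)
    (hdeg : P ≤ Polynomial.degreeLT F (d + 1))
    (I : Finset (Fin n)) (hI : I.card ≤ k - ℓ)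
    (hdim : Module.finrank F (shorten (P.map (ev α v)) (I : Set (Fin n))) = k - I.card) :
    Module.finrank F
        (schurProduct F (shorten (P.map (ev α v)) (I : Set (Fin n)))
          (shorten (P.map (ev α v)) (I : Set (Fin n)))) ≤
      min (min ((ℓ + 2) * (k - I.card) - 1 - ℓ * (ℓ - 1) / 2)
          (k + d - 2 * I.card + ℓ * (ℓ + 1) / 2))
        (2 * (d - I.card) + 1) := by
  have := Submodule.finiteDimensional_of_le hdeg
  subst hP hP1
  exact stmt10_general hkd hdeg (finrank_sup_le_finrank_sup_inf_add hP0le) hα.injOn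
    (fun i _ => hv i) (by omega) hdim
end

section
/- Let F_q be a finite field with q elements, let s, u ≥ 1 be integers, and let j be an integer with 0 ≤ j < min{s, u}. Then the number of pairs (f, g) of polynomials over F_q with deg f = s, deg g = u and deg(gcd(f, g)) ≤ j equals (q−1)² q^{s+u−j−1}(q^{j+1} − 1); equivalently, the proportion of such pairs among all (q−1)² q^{s+u} pairs with deg f = s and deg g = u is 1 − 1/q^{j+1}. -/
open Polynomial

/-!
A pair of polynomials that are not both zero can be written uniquely as `(h * a, h * b)` with `h`
monic and `a`, `b` coprime, and then `h` has the degree of the gcd. If `deg h ≥ k`, division by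
`X ^ k` replaces `h` by a monic quotient of degree `deg h - k` together with an arbitrary remainder
of degree less than `k`. Hence the pairs of degrees `(s + k, u + k)` whose gcd has degree at least
`k` are `q ^ k` times as many as all the pairs of degrees `(s, u)`. Take `k = j + 1` and pass to the
complement.
-/

theorem degree_lt_natCast_add_one_iff {R : Type*} [Semiring R] {p : R[X]} {n : ℕ} :
    p.degree < (n + 1 : ℕ) ↔ p.degree ≤ n := by
  rw [← mem_degreeLT, degreeLT_succ_eq_degreeLE, mem_degreeLE]

section Counting

variable (R : Type*) [Semiring R]

theorem ncard_degreeLT (n : ℕ) : (degreeLT R n : Set R[X]).ncard = Nat.card R ^ n := by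
  rw [← Nat.card_coe_set_eq]
  exact (Nat.card_congr (degreeLTEquiv R n).toEquiv).trans (by simp [Nat.card_fun])

theorem finite_degreeLT [Finite R] (n : ℕ) : (degreeLT R n : Set R[X]).Finite :=
  Finite.of_equiv _ (degreeLTEquiv R n).symm.toEquiv

/-- The set of polynomials of exact degree `n`, defined by `degree` rather than `natDegree` so that
`0` does not belong to `degreeEq R 0`. -/
def degreeEq (n : ℕ) : Set R[X] :=
  {p | p.degree = n}

theorem degreeEq_eq_sdiff (n : ℕ) :
    degreeEq R n = (degreeLT R (n + 1) : Set R[X]) \ degreeLT R n := by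
  ext p
  simp only [degreeEq, Set.mem_ofPred_eq, Set.mem_sdiff, SetLike.mem_coe, mem_degreeLT, not_lt,
    degree_lt_natCast_add_one_iff]
  exact le_antisymm_iff

theorem finite_degreeEq [Finite R] (n : ℕ) : (degreeEq R n).Finite := by
  rw [degreeEq_eq_sdiff]
  exact (finite_degreeLT R _).sdiff

theorem ncard_degreeEq [Finite R] (n : ℕ) :
    (degreeEq R n).ncard = (Nat.card R - 1) * Nat.card R ^ n := by
  rw [degreeEq_eq_sdiff, Set.ncard_sdiff (degreeLT_mono n.le_succ) (finite_degreeLT R n),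
    ncard_degreeLT, ncard_degreeLT, pow_succ', Nat.sub_mul, one_mul]

theorem ncard_degreeEq_prod_degreeEq [Finite R] (s u : ℕ) :
    (degreeEq R s ×ˢ degreeEq R u).ncard = (Nat.card R - 1) ^ 2 * Nat.card R ^ (s + u) := by
  rw [Set.ncard_prod, ncard_degreeEq, ncard_degreeEq]
  ring

end Counting

section Division

variable {R : Type*}

theorem degree_le_degree_mul_of_monic [Semiring R] [Nontrivial R] (q : R[X]) {h : R[X]}
    (hh : h.Monic) : q.degree ≤ (q * h).degree := by
  rw [hh.degree_mul]
  exact le_add_of_nonneg_right (zero_le_degree_iff.2 hh.ne_zero)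

theorem bijOn_modByMonic_divByMonic [CommRing R] [Nontrivial R] {q : R[X]} (hq : q.Monic) :
    Set.BijOn (fun p : R[X] ↦ (p %ₘ q, p /ₘ q)) {p | p.Monic ∧ q.degree ≤ p.degree}
      ({r | r.degree < q.degree} ×ˢ {h | h.Monic}) := by
  refine ⟨fun p ⟨hp, hqp⟩ ↦ ⟨degree_modByMonic_lt p hq, ?_⟩, fun p _ p' _ hpp' ↦ ?_, ?_⟩
  · exact (leadingCoeff_divByMonic_of_monic hq hqp).trans hp
  · obtain ⟨hmod, hdiv⟩ := Prod.mk.inj hpp'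
    rw [← modByMonic_add_div p q, ← modByMonic_add_div p' q, hmod, hdiv]
  · rintro ⟨r, h⟩ ⟨hr, hh⟩
    have hle : q.degree ≤ (q * h).degree := degree_le_degree_mul_of_monic q hh
    have hlt : r.degree < (q * h).degree := lt_of_lt_of_le hr hle
    obtain ⟨hdiv, hmod⟩ := div_modByMonic_unique h r hq ⟨rfl, hr⟩
    refine ⟨r + q * h, ⟨(hq.mul hh).add_of_right hlt, ?_⟩, Prod.ext hmod hdiv⟩
    rwa [degree_add_eq_right_of_degree_lt hlt]

theorem degree_add_degree_divByMonic_mul [Ring R] [NoZeroDivisors R] {p q : R[X]}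
    (hq : q.Monic) (hqp : q.degree ≤ p.degree) (a : R[X]) :
    q.degree + ((p /ₘ q) * a).degree = (p * a).degree := by
  rw [degree_mul, degree_mul, ← add_assoc, degree_add_divByMonic hq hqp]

theorem divByMonic_X_pow_mul_mem_degreeEq_iff [Ring R] [NoZeroDivisors R] [Nontrivial R]
    {p : R[X]} {k : ℕ} (hkp : k ≤ p.degree) (a : R[X]) (n : ℕ) :
    (p /ₘ X ^ k) * a ∈ degreeEq R n ↔ p * a ∈ degreeEq R (n + k) := by
  have hX : (X ^ k : R[X]).degree = k := degree_X_pow k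
  have hadd := degree_add_degree_divByMonic_mul (monic_X_pow k) (hX.trans_le hkp) a
  simp only [degreeEq, Set.mem_ofPred_eq]
  rw [← hadd, hX, add_comm n, Nat.cast_add, WithBot.add_left_inj (WithBot.natCast_ne_bot k)]

end Division

theorem associated_gcd_mul_of_isCoprime {R : Type*} [EuclideanDomain R] [DecidableEq R] {a b : R}
    (hab : IsCoprime a b) (h : R) : Associated (EuclideanDomain.gcd (h * a) (h * b)) h := by
  refine associated_of_dvd_dvd ?_
    (EuclideanDomain.dvd_gcd (dvd_mul_right h a) (dvd_mul_right h b))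
  obtain ⟨x, y, hxy⟩ := hab
  have bezout : h = x * (h * a) + y * (h * b) := by linear_combination -h * hxy
  have hdvd : EuclideanDomain.gcd (h * a) (h * b) ∣ x * (h * a) + y * (h * b) :=
    dvd_add ((EuclideanDomain.gcd_dvd_left _ _).mul_left x)
      ((EuclideanDomain.gcd_dvd_right _ _).mul_left y)
  rwa [← bezout] at hdvd

section GCD

variable {F : Type*} [Field F]

theorem exists_monic_mul_isCoprime {f g : F[X]} (hfg : (f, g) ≠ 0) :
    ∃ h a b : F[X], h.Monic ∧ IsCoprime a b ∧ h * a = f ∧ h * b = g := by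
  classical
  set d := EuclideanDomain.gcd f g
  have hd0 : d ≠ 0 := fun h0 ↦ hfg (Prod.ext_iff.2 (EuclideanDomain.gcd_eq_zero_iff.1 h0))
  obtain ⟨v, hv⟩ : d ∣ normalize d := (associated_normalize d).dvd
  obtain ⟨a, ha⟩ : normalize d ∣ f := normalize_dvd_iff.2 (EuclideanDomain.gcd_dvd_left f g)
  obtain ⟨b, hb⟩ : normalize d ∣ g := normalize_dvd_iff.2 (EuclideanDomain.gcd_dvd_right f g)
  refine ⟨normalize d, a, b, monic_normalize hd0,
    ⟨EuclideanDomain.gcdA f g * v, EuclideanDomain.gcdB f g * v, ?_⟩, ha.symm, hb.symm⟩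
  have bezout : d = f * EuclideanDomain.gcdA f g + g * EuclideanDomain.gcdB f g :=
    EuclideanDomain.gcd_eq_gcd_ab f g
  refine mul_left_cancel₀ (monic_normalize hd0).ne_zero ?_
  linear_combination -hv - v * bezout - EuclideanDomain.gcdA f g * v * ha
    - EuclideanDomain.gcdB f g * v * hb

theorem bijOn_smul_monic_isCoprime :
    Set.BijOn (fun t : F[X] × F[X] × F[X] ↦ t.1 • t.2)
      {t | t.1.Monic ∧ IsCoprime t.2.1 t.2.2} {p | p ≠ 0} := by
  classical
  refine ⟨fun ⟨h, a, b⟩ ⟨hh, hab⟩ ↦ ?_, ?_, ?_⟩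
  · refine smul_ne_zero hh.ne_zero fun h0 ↦ ?_
    obtain ⟨rfl, rfl⟩ := Prod.mk.inj h0
    exact not_isCoprime_zero_zero hab
  · rintro ⟨h, a, b⟩ ⟨hh, hab⟩ ⟨h', a', b'⟩ ⟨hh', hab'⟩ heq
    obtain ⟨ha, hb⟩ : h * a = h' * a' ∧ h * b = h' * b' := Prod.mk.inj heq
    have hassoc : Associated h h' := by
      have hgcd := associated_gcd_mul_of_isCoprime hab h
      rw [ha, hb] at hgcd
      exact hgcd.symm.trans (associated_gcd_mul_of_isCoprime hab' h')
    obtain rfl : h = h' := eq_of_monic_of_associated hh hh' hassoc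
    rw [mul_left_cancel₀ hh.ne_zero ha, mul_left_cancel₀ hh.ne_zero hb]
  · rintro ⟨f, g⟩ hfg
    obtain ⟨h, a, b, hh, hab, rfl, rfl⟩ := exists_monic_mul_isCoprime hfg
    exact ⟨(h, a, b), ⟨hh, hab⟩, rfl⟩

variable (F) in
/-- The factorizations `(h * a, h * b)`, with `h` monic and `a`, `b` coprime, of the pairs of
polynomials of degrees `s` and `u` whose gcd has degree at least `k`. They are encoded as triples
`(h, (a, b))`, so that the factored pair is `h • (a, b)`. -/
def gcdFactorizations (k s u : ℕ) : Set (F[X] × F[X] × F[X]) :=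
  {t | t.1.Monic ∧ IsCoprime t.2.1 t.2.2 ∧ k ≤ t.1.degree ∧
    t.1 * t.2.1 ∈ degreeEq F s ∧ t.1 * t.2.2 ∈ degreeEq F u}

theorem bijOn_smul_gcdFactorizations [DecidableEq F] (k s u : ℕ) :
    Set.BijOn (fun t : F[X] × F[X] × F[X] ↦ t.1 • t.2) (gcdFactorizations F k s u)
      {p ∈ degreeEq F s ×ˢ degreeEq F u | k ≤ (EuclideanDomain.gcd p.1 p.2).degree} := by
  convert! bijOn_smul_monic_isCoprime.subset_right ?_ using 1
  · ext ⟨h, a, b⟩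
    simp only [gcdFactorizations, Set.mem_ofPred_eq, Set.mem_inter_iff, Set.mem_preimage,
      Set.mem_prod, Prod.smul_mk, smul_eq_mul, and_assoc]
    refine and_congr_right fun _ ↦ and_congr_right fun hab ↦ ?_
    rw [degree_eq_degree_of_associated (associated_gcd_mul_of_isCoprime hab h)]
    tauto
  · rintro _ ⟨⟨hf, -⟩, -⟩ rfl
    simp [degreeEq] at hf

theorem bijOn_divByMonic_gcdFactorizations (k s u : ℕ) :
    Set.BijOn (fun t : F[X] × F[X] × F[X] ↦ (t.1 %ₘ X ^ k, t.1 /ₘ X ^ k, t.2))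
      (gcdFactorizations F k (s + k) (u + k))
      ((degreeLT F k : Set F[X]) ×ˢ gcdFactorizations F 0 s u) := by
  have hdiv := bijOn_modByMonic_divByMonic (monic_X_pow (R := F) k)
  simp only [degree_X_pow] at hdiv
  refine ⟨?_, ?_, ?_⟩
  · rintro ⟨h, a, b⟩ ⟨hh, hab, hk, ha, hb⟩
    obtain ⟨hmod, hquot⟩ := hdiv.mapsTo ⟨hh, hk⟩
    exact ⟨mem_degreeLT.2 hmod, hquot, hab, zero_le_degree_iff.2 hquot.ne_zero,
      (divByMonic_X_pow_mul_mem_degreeEq_iff hk a s).2 ha,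
      (divByMonic_X_pow_mul_mem_degreeEq_iff hk b u).2 hb⟩
  · rintro ⟨h, p⟩ ⟨hh, -, hk, -⟩ ⟨h', p'⟩ ⟨hh', -, hk', -⟩ heq
    simp only [Prod.mk.injEq] at heq
    obtain ⟨hmod, hquot, rfl⟩ := heq
    obtain rfl : h = h' := hdiv.injOn ⟨hh, hk⟩ ⟨hh', hk'⟩ (Prod.ext hmod hquot)
    rfl
  · rintro ⟨r, h', a, b⟩ ⟨hr, hh', hab, -, ha, hb⟩
    obtain ⟨h, ⟨hh, hk⟩, heq⟩ := hdiv.surjOn (Set.mk_mem_prod (mem_degreeLT.1 hr) hh')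
    obtain ⟨rfl, rfl⟩ := Prod.mk.inj heq
    exact ⟨(h, a, b), ⟨hh, hab, hk, (divByMonic_X_pow_mul_mem_degreeEq_iff hk a s).1 ha,
      (divByMonic_X_pow_mul_mem_degreeEq_iff hk b u).1 hb⟩, rfl⟩

theorem ncard_gcdFactorizations_zero (s u : ℕ) :
    (gcdFactorizations F 0 s u).ncard = (degreeEq F s ×ˢ degreeEq F u).ncard := by
  classical
  rw [(bijOn_smul_gcdFactorizations 0 s u).ncard_eq]
  congr 1
  refine Set.sep_eq_self_iff_mem_true.2 fun p ⟨hf, _⟩ ↦ ?_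
  refine zero_le_degree_iff.2 fun h0 ↦ ?_
  simp [degreeEq, (EuclideanDomain.gcd_eq_zero_iff.1 h0).1] at hf

theorem ncard_le_degree_gcd [DecidableEq F] (k s u : ℕ) :
    {p ∈ degreeEq F (s + k) ×ˢ degreeEq F (u + k) |
        k ≤ (EuclideanDomain.gcd p.1 p.2).degree}.ncard =
      Nat.card F ^ k * (degreeEq F s ×ˢ degreeEq F u).ncard := by
  rw [← (bijOn_smul_gcdFactorizations k (s + k) (u + k)).ncard_eq,
    (bijOn_divByMonic_gcdFactorizations k s u).ncard_eq, Set.ncard_prod, ncard_degreeLT,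
    ncard_gcdFactorizations_zero]

theorem ncard_degree_gcd_lt [Finite F] [DecidableEq F] (k s u : ℕ) :
    {p ∈ degreeEq F (s + k) ×ˢ degreeEq F (u + k) |
        (EuclideanDomain.gcd p.1 p.2).degree < k}.ncard =
      (Nat.card F - 1) ^ 2 * Nat.card F ^ (s + u + k) * (Nat.card F ^ k - 1) := by
  set pairs := degreeEq F (s + k) ×ˢ degreeEq F (u + k)
  set large := {p ∈ pairs | k ≤ (EuclideanDomain.gcd p.1 p.2).degree} with hlarge
  have hfin : pairs.Finite := (finite_degreeEq F _).prod (finite_degreeEq F _)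
  have hsub : large ⊆ pairs := Set.sep_subset _ _
  have hcompl : {p ∈ pairs | (EuclideanDomain.gcd p.1 p.2).degree < k} = pairs \ large := by
    ext p
    simp only [hlarge, Set.mem_ofPred_eq, Set.mem_sdiff, not_and, not_le]
    tauto
  rw [hcompl, Set.ncard_sdiff hsub (hfin.subset hsub), ncard_le_degree_gcd,
    ncard_degreeEq_prod_degreeEq, ncard_degreeEq_prod_degreeEq, Nat.mul_sub]
  congr 1 <;> ring

end GCD

/-- For `s, u ≥ 1` and `0 ≤ j < min{s,u}`, the number of pairs `(f, g)` of polynomials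
over `F_q` with `deg f = s`, `deg g = u` and `deg(gcd(f,g)) ≤ j` equals
`(q−1)² q^{s+u−j−1}(q^{j+1} − 1)`, i.e. a proportion `1 − 1/q^{j+1}` of all
`(q−1)² q^{s+u}` pairs with `deg f = s`, `deg g = u`. -/
theorem stmt16 {F : Type*} [Field F] [Fintype F] [DecidableEq F]
    {s u j : ℕ} (hs : 1 ≤ s) (hu : 1 ≤ u) (hj : j < min s u) :
    Set.ncard {p : Polynomial F × Polynomial F |
        p.1.degree = (s : WithBot ℕ) ∧ p.2.degree = (u : WithBot ℕ) ∧
        (EuclideanDomain.gcd p.1 p.2).natDegree ≤ j} =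
      (Fintype.card F - 1) ^ 2 * Fintype.card F ^ (s + u - j - 1) *
        (Fintype.card F ^ (j + 1) - 1) := by
  obtain ⟨a, rfl⟩ := Nat.exists_eq_add_of_le' (lt_min_iff.1 hj).1
  obtain ⟨b, rfl⟩ := Nat.exists_eq_add_of_le' (lt_min_iff.1 hj).2
  have hexp : a + (j + 1) + (b + (j + 1)) - j - 1 = a + b + (j + 1) := by omega
  rw [Nat.succ_eq_add_one, hexp, ← Nat.card_eq_fintype_card, ← ncard_degree_gcd_lt]
  simp only [natDegree_le_iff_degree_le, degree_lt_natCast_add_one_iff, degreeEq, Set.mem_prod,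
    Set.mem_ofPred_eq, and_assoc]
end
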